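/- arXiv:2405.02776 — 2 statements merged into one kernel-verified Lean document; each statement's English description precedes it below -/
import Mathlib

section
/- The infinite series identity 4π/√3 = Σ_{k=0}^{∞} (-1/4)^k · (4/3)_k / (7/6)_k · (30k² + 45k + 16) / ((k + 1)(2k + 1)(3k + 2)) holds, where the sum is over natural numbers k and all quantities are real numbers. -/
noncomputable def risingFactorial (a : ℝ) (k : ℕ) : ℝ := ∏ i ∈ Finset.range k, (a + i)

open Filter Topology in
lemma tele_aux : HasSum (fun n : ℕ => 1 / ((n:ℝ) + 1/3) - 1 / ((n:ℝ) + 4/3)) 3 := by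
  rw [hasSum_iff_tendsto_nat_of_nonneg]
  · have h : ∀ N : ℕ, ∑ n ∈ Finset.range N, (1 / ((n:ℝ) + 1/3) - 1 / ((n:ℝ) + 4/3))
        = 3 - 1 / ((N:ℝ) + 1/3) := by
      intro N
      induction N with
      | zero => norm_num
      | succ N ih =>
        rw [Finset.sum_range_succ, ih]
        push_cast
        have : (N:ℝ) + 1 + 1/3 = N + 4/3 := by ring
        rw [this]; ring
    simp_rw [h]
    have h2 : Tendsto (fun N : ℕ => 1 / ((N:ℝ) + 1/3)) atTop (𝓝 0) := by
      refine Tendsto.div_atTop tendsto_const_nhds ?_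
      exact tendsto_atTop_add_const_right _ _ tendsto_natCast_atTop_atTop
    simpa using tendsto_const_nhds.sub h2
  · intro n
    have : (0:ℝ) ≤ n := Nat.cast_nonneg n
    rw [sub_nonneg]
    apply one_div_le_one_div_of_le <;> linarith

lemma third_mem : ((1/3 : ℝ) : ℂ) ∈ Complex.integerComplement := by
  rintro ⟨m, hm⟩
  have h : ((m:ℝ):ℂ) = ((1/3:ℝ):ℂ) := by rw [← hm]; simp
  have h2 : (m:ℝ) = 1/3 := by exact_mod_cast h
  have h3 : ((3 * m : ℤ):ℝ) = ((1:ℤ):ℝ) := by push_cast; rw [h2]; norm_num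
  have h4 : 3 * m = 1 := by exact_mod_cast h3
  omega

lemma cot_third : Real.cot (Real.pi * (1/3)) = 1 / Real.sqrt 3 := by
  rw [Real.cot_eq_cos_div_sin, show Real.pi * (1/3) = Real.pi / 3 by ring,
    Real.cos_pi_div_three, Real.sin_pi_div_three]
  field_simp

lemma cot_aux : HasSum (fun n : ℕ => 1 / ((1/3:ℝ) - (n + 1)) + 1 / ((1/3:ℝ) + (n + 1)))
    (Real.pi / Real.sqrt 3 - 3) := by
  have hs := (summable_cotTerm third_mem).hasSum
  have he : ∑' n, cotTerm ((1/3 : ℝ) : ℂ) n = ((Real.pi / Real.sqrt 3 - 3 : ℝ) : ℂ) := by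
    have := cot_series_rep' third_mem
    unfold cotTerm
    rw [← this]
    have hc : (Real.pi:ℂ) * ((1/3:ℝ):ℂ) = ((Real.pi * (1/3) : ℝ):ℂ) := by push_cast; ring
    rw [hc, ← Complex.ofReal_cot, cot_third]
    push_cast
    ring
  rw [he] at hs
  rw [← Complex.hasSum_ofReal]
  convert hs using 2 with n
  unfold cotTerm
  push_cast
  ring

lemma base_sum : HasSum (fun n : ℕ => (4/3) / (((n:ℝ) + 2/3) * ((n:ℝ) + 1/3)))
    (4 * Real.pi / Real.sqrt 3) := by
  have h := (tele_aux.add cot_aux).mul_left 4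
  have hv : 4 * (3 + (Real.pi / Real.sqrt 3 - 3)) = 4 * Real.pi / Real.sqrt 3 := by ring
  rw [hv] at h
  have hfun : (fun n : ℕ => (4/3) / (((n:ℝ) + 2/3) * ((n:ℝ) + 1/3))) = fun n : ℕ =>
      4 * (1 / ((n:ℝ) + 1/3) - 1 / ((n:ℝ) + 4/3) +
        (1 / ((1/3:ℝ) - (n + 1)) + 1 / ((1/3:ℝ) + (n + 1)))) := by
    funext n
    have : (0:ℝ) ≤ n := Nat.cast_nonneg n
    have h1 : (1/3:ℝ) - (n+1) = -(n + 2/3) := by ring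
    have h2 : (1/3:ℝ) + (n+1) = n + 4/3 := by ring
    rw [h1, h2]
    have a1 : (n:ℝ) + 2/3 ≠ 0 := by positivity
    have a2 : (n:ℝ) + 1/3 ≠ 0 := by positivity
    have a3 : (n:ℝ) + 4/3 ≠ 0 := by positivity
    rw [div_neg]
    have e : (4/3 : ℝ) / (((n:ℝ) + 2/3) * ((n:ℝ) + 1/3))
      = 4 * (1 / ((n:ℝ) + 1/3) - 1 / ((n:ℝ) + 2/3)) := by
      rw [div_sub_div _ _ a2 a1, div_eq_iff (by positivity), mul_comm (n + 2/3 : ℝ)]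
      field_simp
      ring
    rw [e]; ring
  rw [hfun]; exact h

lemma rf_succ (a : ℝ) (k : ℕ) : risingFactorial a (k+1) = risingFactorial a k * (a + k) := by
  unfold risingFactorial; rw [Finset.prod_range_succ]

lemma rf_succ' (a : ℝ) (k : ℕ) : risingFactorial a (k+1) = a * risingFactorial (a+1) k := by
  unfold risingFactorial; rw [Finset.prod_range_succ']
  push_cast
  rw [add_zero, mul_comm]
  congr 1
  apply Finset.prod_congr rfl
  intros; ring

lemma rf_pos {a : ℝ} (ha : 0 < a) (k : ℕ) : 0 < risingFactorial a k := by
  unfold risingFactorial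
  apply Finset.prod_pos
  intros; positivity

lemma rf_double (k : ℕ) : risingFactorial (1/3) (2*k+1) =
    1/3 * 4^k * risingFactorial (2/3) k * risingFactorial (7/6) k := by
  induction k with
  | zero => simp [risingFactorial]
  | succ k ih =>
    rw [show 2*(k+1)+1 = (2*k+1)+1+1 by ring, rf_succ, rf_succ, ih, rf_succ, rf_succ]
    push_cast
    ring

noncomputable def wzF (n k : ℕ) : ℝ :=
  (4/3) * (-1)^k * risingFactorial (2/3) k * risingFactorial (4/3) k /
    (((n:ℝ) + k + 2/3) * risingFactorial ((n:ℝ) + 1/3) (2*k+1))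

noncomputable def wzQ (x y : ℝ) : ℝ :=
  1/(2*y+1) * x^2 + (3*y+2)*(8*y+7)/(6*(y+1)*(2*y+1)) * x
    + (y+2/3)*(30*y^2+45*y+16)/(6*(y+1)*(2*y+1))

noncomputable def wzG (n k : ℕ) : ℝ := wzF n k * (wzQ n k / ((n:ℝ) + 2*k + 4/3))

lemma wzF_succ_k (n k : ℕ) : wzF n (k+1) = -(wzF n k *
    (((k:ℝ)+2/3)*(k+4/3)*(n+k+2/3) / ((n+k+5/3)*(n+2*k+4/3)*(n+2*k+7/3)))) := by
  unfold wzF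
  have hp := (rf_pos (a := (n:ℝ)+1/3) (by positivity) (2*k+1)).ne'
  rw [show 2*(k+1)+1 = (2*k+1)+1+1 by ring, rf_succ, rf_succ, rf_succ, rf_succ]
  push_cast
  have e1 : (n:ℝ) + (k+1) + 2/3 = n+k+5/3 := by ring
  have e2 : (n:ℝ) + 1/3 + (2*k+1) = n+2*k+4/3 := by ring
  have e3 : (n:ℝ) + 1/3 + (2*k+2) = n+2*k+7/3 := by ring
  rw [e1, e2, e3]
  have a1 : (n:ℝ)+k+5/3 ≠ 0 := by positivity
  have a2 : (n:ℝ)+2*k+4/3 ≠ 0 := by positivity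
  have a3 : (n:ℝ)+2*k+7/3 ≠ 0 := by positivity
  have a4 : (n:ℝ)+k+2/3 ≠ 0 := by positivity
  generalize risingFactorial ((n:ℝ)+1/3) (2*k+1) = P at *
  generalize (n:ℝ)+k+5/3 = A at *
  generalize (n:ℝ)+2*k+4/3 = B at *
  generalize (n:ℝ)+2*k+7/3 = C at *
  generalize (n:ℝ)+k+2/3 = D at *
  field_simp
  ring

lemma wzF_succ_n (n k : ℕ) : wzF (n+1) k = wzF n k *
    ((n+1/3)*(n+k+2/3) / ((n+2*k+4/3)*(n+k+5/3))) := by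
  unfold wzF
  have hp := (rf_pos (a := (n:ℝ)+1/3) (by positivity) (2*k+1)).ne'
  have hp2 := (rf_pos (a := (n:ℝ)+1/3+1) (by positivity) (2*k+1)).ne'
  have h := (rf_succ ((n:ℝ)+1/3) (2*k+1)).symm.trans (rf_succ' ((n:ℝ)+1/3) (2*k+1))
  push_cast at h ⊢
  have e1 : (n:ℝ) + 1 + k + 2/3 = n+k+5/3 := by ring
  have e2 : (n:ℝ) + 1/3 + (2*k+1) = n+2*k+4/3 := by ring
  have e3 : (n:ℝ) + 1 + 1/3 = n + 1/3 + 1 := by ring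
  rw [e2] at h
  rw [e1, e3]
  have a1 : (n:ℝ)+k+5/3 ≠ 0 := by positivity
  have a2 : (n:ℝ)+2*k+4/3 ≠ 0 := by positivity
  have a4 : (n:ℝ)+k+2/3 ≠ 0 := by positivity
  have a5 : (n:ℝ)+1/3 ≠ 0 := by positivity
  generalize risingFactorial ((n:ℝ)+1/3) (2*k+1) = P at *
  generalize risingFactorial ((n:ℝ)+1/3+1) (2*k+1) = P' at *
  generalize (n:ℝ)+k+5/3 = A at *
  generalize (n:ℝ)+2*k+4/3 = B at *
  generalize (n:ℝ)+k+2/3 = D at *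
  generalize (n:ℝ)+1/3 = E at *
  rw [div_mul_div_comm, div_eq_div_iff (by positivity) (by positivity)]
  linear_combination ((4/3) * (-1)^k * risingFactorial (2/3) k * risingFactorial (4/3) k * A * D) * h

lemma wz_rat (x y : ℝ) (hx : 0 ≤ x) (hy : 0 ≤ y) :
    1 + (y+2/3)*(y+4/3)*(x+y+2/3) / ((x+y+5/3)*(x+2*y+4/3)*(x+2*y+7/3))
    = wzQ x y / (x+2*y+4/3) - ((x+1/3)*(x+y+2/3) / ((x+2*y+4/3)*(x+y+5/3))) *
      (wzQ (x+1) y / (x+2*y+7/3)) := by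
  unfold wzQ
  have a1 : x+y+5/3 ≠ 0 := by positivity
  have a2 : x+2*y+4/3 ≠ 0 := by positivity
  have a3 : x+2*y+7/3 ≠ 0 := by positivity
  have a6 : y+1 ≠ 0 := by positivity
  have a7 : 2*y+1 ≠ 0 := by positivity
  field_simp
  ring

lemma wz_pair (n k : ℕ) : wzF n k - wzF n (k+1) = wzG n k - wzG (n+1) k := by
  have h := wz_rat n k (Nat.cast_nonneg n) (Nat.cast_nonneg k)
  unfold wzG
  rw [wzF_succ_k, wzF_succ_n]
  push_cast
  have e : (n:ℝ) + 1 + 2*k + 4/3 = n+2*k+7/3 := by ring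
  rw [e]
  linear_combination wzF n k * h

lemma wzF_zero (n : ℕ) : wzF n 0 = (4/3) / (((n:ℝ) + 2/3) * ((n:ℝ) + 1/3)) := by
  simp [wzF, risingFactorial]

lemma wzF_bound (n k : ℕ) : |wzF n k| ≤ (1/2)^k * wzF n 0 := by
  induction k with
  | zero => 
    rw [wzF_zero, abs_of_nonneg (by positivity)]; simp
  | succ k ih =>
    rw [wzF_succ_k, abs_neg, abs_mul, pow_succ]
    have hr : |((k:ℝ)+2/3)*(k+4/3)*(n+k+2/3) / ((n+k+5/3)*(n+2*k+4/3)*(n+2*k+7/3))| ≤ 1/2 := by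
      rw [abs_of_nonneg (by positivity), div_le_iff₀ (by positivity)]
      have hn : (0:ℝ) ≤ n := Nat.cast_nonneg n
      have hk : (0:ℝ) ≤ k := Nat.cast_nonneg k
      calc ((k:ℝ)+2/3)*(k+4/3)*(n+k+2/3) 
          ≤ ((n+2*k+4/3)/2) * (n+2*k+7/3) * (n+k+5/3) := by
            gcongr <;> linarith
        _ = _ := by ring
    calc _ ≤ ((1/2)^k * wzF n 0) * (1/2) := mul_le_mul ih hr (abs_nonneg _) ((abs_nonneg _).trans ih)
      _ = _ := by ring

lemma wzF_summable (k : ℕ) : Summable (fun n => wzF n k) := by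
  have hb : Summable (fun n => wzF n 0) := by
    simp_rw [wzF_zero]; exact base_sum.summable
  exact Summable.of_norm_bounded (hb.mul_left ((1/2)^k)) (fun n => wzF_bound n k)

noncomputable def wzA (k : ℕ) : ℝ := ∑' n, wzF n k

lemma wzA_zero : wzA 0 = 4 * Real.pi / Real.sqrt 3 := by
  unfold wzA; simp_rw [wzF_zero]; exact base_sum.tsum_eq

lemma wzA_bound (k : ℕ) : |wzA k| ≤ (1/2)^k * wzA 0 := by
  unfold wzA
  rw [← tsum_mul_left]
  exact tsum_of_norm_bounded (f := fun n => wzF n k) ((wzF_summable 0).mul_left ((1/2)^k)).hasSum (fun n => wzF_bound n k)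

lemma wzG_bound (n k : ℕ) : |wzG n k| ≤
    (wzQ 1 k * 4) * (1 / ((n:ℝ) + 1/3)) := by
  unfold wzG
  have hn : (0:ℝ) ≤ n := Nat.cast_nonneg n
  have hq : 0 ≤ wzQ n k := by unfold wzQ; positivity
  have hq1 : 0 ≤ wzQ 1 k := by unfold wzQ; positivity
  have hq2 : wzQ n k ≤ wzQ 1 k * (3 * (n + 2/3)^2) := by
    unfold wzQ
    have ha : (0:ℝ) ≤ 1/(2*(k:ℝ)+1) := by positivity
    have hb : (0:ℝ) ≤ (3*(k:ℝ)+2)*(8*k+7)/(6*(k+1)*(2*k+1)) := by positivity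
    have hc : (0:ℝ) ≤ ((k:ℝ)+2/3)*(30*k^2+45*k+16)/(6*(k+1)*(2*k+1)) := by positivity
    generalize 1/(2*(k:ℝ)+1) = a at *
    generalize (3*(k:ℝ)+2)*(8*k+7)/(6*(k+1)*(2*k+1)) = b at *
    generalize ((k:ℝ)+2/3)*(30*k^2+45*k+16)/(6*(k+1)*(2*k+1)) = c at *
    have e1 : (n:ℝ)^2 ≤ 3 * (n+2/3)^2 := by nlinarith
    have e2 : (n:ℝ) ≤ 3 * (n+2/3)^2 := by nlinarith
    have e3 : (1:ℝ) ≤ 3 * (n+2/3)^2 := by nlinarith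
    nlinarith [mul_le_mul_of_nonneg_left e1 ha, mul_le_mul_of_nonneg_left e2 hb,
      mul_le_mul_of_nonneg_left e3 hc]
  have hF : |wzF n k| ≤ (4/3) / (((n:ℝ) + 2/3) * ((n:ℝ) + 1/3)) := by
    refine (wzF_bound n k).trans ?_
    rw [← wzF_zero]
    have : 0 ≤ wzF n 0 := by rw [wzF_zero]; positivity
    have h2 : ((1/2:ℝ))^k ≤ 1 := pow_le_one₀ (by norm_num) (by norm_num)
    nlinarith
  have hR : wzQ n k / ((n:ℝ) + 2*k + 4/3) ≤ wzQ 1 k * (3 * (n+2/3)) := by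
    rw [div_le_iff₀ (by positivity)]
    refine hq2.trans ?_
    have hk : (0:ℝ) ≤ k := Nat.cast_nonneg k
    calc _ = wzQ 1 k * (3 * (n+2/3)) * (n+2/3) := by ring
      _ ≤ _ := mul_le_mul_of_nonneg_left (by linarith) (by positivity)
  rw [abs_mul, abs_of_nonneg (a := wzQ n k / _) (by positivity)]
  calc _ ≤ ((4/3) / (((n:ℝ) + 2/3) * ((n:ℝ) + 1/3))) * (wzQ 1 k * (3 * (n+2/3))) := by gcongr
    _ = _ := by field_simp

open Filter Topology in
lemma wzA_diff (k : ℕ) : wzA k - wzA (k+1) = wzG 0 k := by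
  have hs : HasSum (fun n => wzF n k - wzF n (k+1)) (wzA k - wzA (k+1)) :=
    (wzF_summable k).hasSum.sub (wzF_summable (k+1)).hasSum
  have h1 := hs.tendsto_sum_nat
  simp_rw [wz_pair] at h1
  have h2 : ∀ N, ∑ n ∈ Finset.range N, (wzG n k - wzG (n+1) k) = wzG 0 k - wzG N k :=
    fun N => Finset.sum_range_sub' (fun n => wzG n k) N
  simp_rw [h2] at h1
  have h3 : Tendsto (fun N => wzG N k) atTop (𝓝 0) := by
    refine squeeze_zero_norm (fun n => wzG_bound n k) ?_
    have : Tendsto (fun N : ℕ => 1 / ((N:ℝ) + 1/3)) atTop (𝓝 0) := by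
      refine Tendsto.div_atTop tendsto_const_nhds ?_
      exact tendsto_atTop_add_const_right _ _ tendsto_natCast_atTop_atTop
    simpa using this.const_mul (wzQ 1 k * 4)
  have h4 := (tendsto_const_nhds (x := wzG 0 k)).sub h3
  rw [sub_zero] at h4
  exact tendsto_nhds_unique h1 h4

lemma wzG_zero (k : ℕ) : wzG 0 k = (-1/4 : ℝ) ^ k * (risingFactorial (4/3) k) /
        (risingFactorial (7/6) k) * ((30 * (k:ℝ)^2 + 45 * (k:ℝ) + 16) / (((k:ℝ) + 1) * (2 * (k:ℝ) + 1) * (3 * (k:ℝ) + 2))) := by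
  unfold wzG wzF wzQ
  have h1 := (rf_pos (a := 2/3) (by norm_num) k).ne'
  have h2 := (rf_pos (a := 7/6) (by norm_num) k).ne'
  have e : ((0:ℕ):ℝ) + 1/3 = 1/3 := by norm_num
  rw [e, rf_double, div_pow]
  push_cast
  have a1 : (0:ℝ) + k + 2/3 ≠ 0 := by positivity
  have a2 : (0:ℝ) + 2 * k + 4/3 ≠ 0 := by positivity
  field_simp
  ring

open Filter Topology in
theorem stmt_10 :
    4 * Real.pi / Real.sqrt 3 =
      ∑' k : ℕ, (-1/4 : ℝ) ^ k * (risingFactorial (4/3) k) /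
        (risingFactorial (7/6) k) * ((30 * (k:ℝ)^2 + 45 * (k:ℝ) + 16) / (((k:ℝ) + 1) * (2 * (k:ℝ) + 1) * (3 * (k:ℝ) + 2))) := by
  simp_rw [← wzG_zero, ← wzA_diff]
  have hg : Summable (fun k : ℕ => (1/2:ℝ)^k * wzA 0) :=
    (summable_geometric_of_lt_one (by norm_num) (by norm_num)).mul_right _
  have hA : Summable wzA := Summable.of_norm_bounded hg wzA_bound
  have hA1 : Summable (fun k => wzA (k+1)) := (summable_nat_add_iff 1).2 hA
  rw [hA.tsum_sub hA1, hA.tsum_eq_zero_add, ← wzA_zero]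
  ring
end

section
/- The infinite series identity 15√2/4 = Σ_{k=0}^{∞} (-1/27)^k · [(-1/4)_k (5/4)_k (5/4)_k] / [(1)_k (13/12)_k (17/12)_k] · (28k + 5) holds, where the sum is over natural numbers k and all quantities are real numbers. -/
open Filter Topology

namespace S17

/-- ratio in the direction n -/
noncomputable def rho (n m : ℝ) : ℝ :=
  -((1/2+m+n)*(n-1/4)*(n+5/4)*(3/4+2*n)*(7/4+2*n)*(3/2+m+2*n)*(5/2+m+2*n)) /
   ((13/4+m+3*n)*(17/4+m+3*n)*(21/4+m+3*n)*(2*n+2)*(2*n+3)*(11/4+m+2*n)*(15/4+m+2*n))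

/-- ratio in the direction m -/
noncomputable def sig (n m : ℝ) : ℝ :=
  ((1/2+m+n)*(3/2+m+2*n))/((13/4+m+3*n)*(11/4+m+2*n))

noncomputable def w (n m : ℕ) : ℝ := ∏ i ∈ Finset.range n, rho i m
noncomputable def c (m : ℕ) : ℝ := ∏ j ∈ Finset.range m, sig 0 j

noncomputable def y (n m : ℝ) : ℝ :=
  315/128 + 603/64*m + 373/32*m^2 + 93/16*m^3 + m^4
  + n*(2007/64 + 1323/16*m + 1123/16*m^2 + 89/4*m^3 + 2*m^4)
  + n^2*(575/4 + 1047/4*m + 565/4*m^2 + 22*m^3)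
  + n^3*(1215/4 + 351*m + 92*m^2)
  + n^4*(300+168*m) + 112*n^5

noncomputable def h' (n m : ℝ) : ℝ :=
  (5/4+m+3*n)*(9/4+m+3*n)*(2*n)*(2*n+1)*(7/4+m+2*n)

noncomputable def G (n m : ℕ) : ℝ := w n m * c m * y n m
noncomputable def H (n m : ℕ) : ℝ := w n m * c m * h' n m

lemma rho_sig (n m : ℝ) (hn : 0 ≤ n) (hm : 0 ≤ m) :
    sig (n+1) m * rho n m = rho n (m+1) * sig n m := by
  unfold sig rho
  field_simp
  ring

lemma w_m (n m : ℕ) : w n (m+1) * sig 0 m = w n m * sig n m := by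
  induction n with
  | zero => simp [w]
  | succ n ih =>
    have e1 : w (n+1) (m+1) = w n (m+1) * rho n (m+1) := by simp [w, Finset.prod_range_succ]
    have e2 : w (n+1) m = w n m * rho n m := by simp [w, Finset.prod_range_succ]
    have := rho_sig n m (by positivity) (by positivity)
    rw [e1, e2]
    push_cast
    calc _ = (w n (m+1) * sig 0 m) * rho n (m+1) := by ring
      _ = w n m * (rho n (m+1) * sig n m) := by rw [ih]; ring
      _ = _ := by rw [← this]; ring

lemma key (n m : ℝ) (hn : 0 ≤ n) (hm : 0 ≤ m) :
    sig n m * y n (m+1) - y n m = rho n m * h' (n+1) m - h' n m := by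
  unfold sig y rho h'
  field_simp
  ring

lemma G_H (n m : ℕ) : G n (m+1) - G n m = H (n+1) m - H n m := by
  have e2 : w (n+1) m = w n m * rho n m := by simp [w, Finset.prod_range_succ]
  have e3 : c (m+1) = c m * sig 0 m := by simp [c, Finset.prod_range_succ]
  have k := key n m (by positivity) (by positivity)
  have := w_m n m
  unfold G H
  rw [e2, e3]
  push_cast
  calc _ = (w n (m+1) * sig 0 m) * c m * y n (m+1) - w n m * c m * y n m := by ring
    _ = w n m * c m * (sig n m * y n (m+1) - y n m) := by rw [this]; ring
    _ = _ := by rw [k]; ring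

lemma rho_le (n : ℕ) (m : ℝ) (hm : 0 ≤ m) :
    |rho n m| ≤ 1/9 ∧ |rho n m| ≤ (2*n+1)/(m+1) := by
  have hn : (0:ℝ) ≤ n := by positivity
  generalize (n:ℝ) = n at *
  have e : rho n m = -(((1/2+m+n)/(13/4+m+3*n)) * ((n-1/4)/(2*n+2)) * ((n+5/4)/(2*n+3))
     * ((3/4+2*n)/(17/4+m+3*n)) * ((7/4+2*n)/(21/4+m+3*n)) * ((3/2+m+2*n)/(11/4+m+2*n))
     * ((5/2+m+2*n)/(15/4+m+2*n))) := by
    unfold rho; field_simp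
  have b1 : |(1/2+m+n)/(13/4+m+3*n)| ≤ 1 := by
    rw [abs_of_nonneg (by positivity), div_le_iff₀ (by positivity)]; linarith
  have b2 : |(n-1/4)/(2*n+2)| ≤ 1/2 := by
    rw [abs_div, abs_of_pos (show 0 < 2*n+2 by positivity), div_le_iff₀ (by positivity), abs_le]
    constructor <;> linarith
  have b3 : |(n+5/4)/(2*n+3)| ≤ 1/2 := by
    rw [abs_of_nonneg (by positivity), div_le_iff₀ (by positivity)]; linarith
  have b4 : |(3/4+2*n)/(17/4+m+3*n)| ≤ 2/3 := by
    rw [abs_of_nonneg (by positivity), div_le_iff₀ (by positivity)]; linarith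
  have b4' : |(3/4+2*n)/(17/4+m+3*n)| ≤ (2*n+1)/(m+1) := by
    rw [abs_of_nonneg (by positivity)]
    apply div_le_div₀ <;> first | positivity | linarith
  have b5 : |(7/4+2*n)/(21/4+m+3*n)| ≤ 2/3 := by
    rw [abs_of_nonneg (by positivity), div_le_iff₀ (by positivity)]; linarith
  have b6 : |(3/2+m+2*n)/(11/4+m+2*n)| ≤ 1 := by
    rw [abs_of_nonneg (by positivity), div_le_iff₀ (by positivity)]; linarith
  have b7 : |(5/2+m+2*n)/(15/4+m+2*n)| ≤ 1 := by
    rw [abs_of_nonneg (by positivity), div_le_iff₀ (by positivity)]; linarith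
  rw [e, abs_neg]
  simp only [abs_mul]
  constructor
  · calc _ ≤ (1:ℝ) * (1/2) * (1/2) * (2/3) * (2/3) * 1 * 1 := by gcongr
      _ = 1/9 := by norm_num
  · calc _ ≤ (1:ℝ) * (1/2) * (1/2) * ((2*n+1)/(m+1)) * (2/3) * 1 * 1 := by gcongr
      _ = ((2*n+1)/(m+1)) * (1/6) := by ring
      _ ≤ _ := by
        have : 0 ≤ (2*n+1)/(m+1) := by positivity
        linarith

lemma w_le (n m : ℕ) : |w n m| ≤ (1/9)^n := by
  unfold w
  rw [Finset.abs_prod]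
  calc _ ≤ ∏ i ∈ Finset.range n, (1/9:ℝ) :=
        Finset.prod_le_prod (fun _ _ => abs_nonneg _)
          (fun i _ => (rho_le i m (by positivity)).1)
    _ = _ := by simp

lemma w_lim (n : ℕ) : Tendsto (fun m => w (n+1) m) atTop (𝓝 0) := by
  have l : Tendsto (fun m : ℕ => (2*(n:ℝ)+1) * (1/((m:ℝ)+1))) atTop (𝓝 ((2*n+1) * 0)) :=
    tendsto_one_div_add_atTop_nhds_zero_nat.const_mul _
  rw [mul_zero] at l
  refine squeeze_zero_norm (fun m => ?_) l
  have e2 : w (n+1) m = w n m * rho n m := by simp [w, Finset.prod_range_succ]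
  rw [e2, norm_mul, Real.norm_eq_abs, Real.norm_eq_abs]
  have h1 : |w n m| ≤ 1 := (w_le n m).trans (pow_le_one₀ (by norm_num) (by norm_num))
  have h2 := (rho_le n m (by positivity)).2
  calc _ ≤ 1 * ((2*(n:ℝ)+1)/((m:ℝ)+1)) := by gcongr
    _ = _ := by ring

lemma y_nonneg (n m : ℝ) (hn : 0 ≤ n) (hm : 0 ≤ m) : 0 ≤ y n m := by
  unfold y; positivity

lemma y_le (n m : ℝ) (hn : 0 ≤ n) (hm : 0 ≤ m) : y n m ≤ 1000 * (m+1)^4 * (n+1)^5 := by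
  rw [← sub_nonneg]
  unfold y
  ring_nf
  positivity

lemma h_le (n m : ℝ) (hn : 0 ≤ n) (hm : 0 ≤ m) : h' n m ≤ 4 * y n m := by
  rw [← sub_nonneg]
  unfold y h'
  ring_nf
  positivity

lemma h_nonneg (n m : ℝ) (hn : 0 ≤ n) (hm : 0 ≤ m) : 0 ≤ h' n m := by
  unfold h'; positivity

noncomputable def L : ℝ := 945 * Real.sqrt 2 / 512

lemma gamma_val : Real.Gamma (13/4) * Real.Gamma (11/4) /
    (Real.Gamma (1/2) * Real.Gamma (3/2)) = L := by
  have a1 : Real.Gamma (13/4) = 9/4 * (5/4 * (1/4 * Real.Gamma (1/4))) := by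
    rw [show (13/4:ℝ) = 1/4+1+1+1 by norm_num, Real.Gamma_add_one (by norm_num),
      Real.Gamma_add_one (by norm_num), Real.Gamma_add_one (by norm_num)]; norm_num
  have a2 : Real.Gamma (11/4) = 7/4 * (3/4 * Real.Gamma (3/4)) := by
    rw [show (11/4:ℝ) = 3/4+1+1 by norm_num, Real.Gamma_add_one (by norm_num),
      Real.Gamma_add_one (by norm_num)]; norm_num
  have a3 : Real.Gamma (3/2) = 1/2 * Real.Gamma (1/2) := by
    rw [← Real.Gamma_add_one (by norm_num)]; norm_num
  have r := Real.Gamma_mul_Gamma_one_sub (1/4)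
  rw [show (1:ℝ) - 1/4 = 3/4 by norm_num, show Real.pi * (1/4) = Real.pi/4 by ring,
    Real.sin_pi_div_four] at r
  have s2 : Real.sqrt 2 * Real.sqrt 2 = 2 := Real.mul_self_sqrt (by norm_num)
  have sp : Real.sqrt Real.pi * Real.sqrt Real.pi = Real.pi := Real.mul_self_sqrt Real.pi_pos.le
  have pp := Real.pi_pos
  rw [a1, a2, a3, Real.Gamma_one_half_eq]
  have : 9/4 * (5/4 * (1/4 * Real.Gamma (1/4))) * (7/4 * (3/4 * Real.Gamma (3/4)))
     = 945/1024 * (Real.Gamma (1/4) * Real.Gamma (3/4)) := by ring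
  rw [this, r, show Real.sqrt Real.pi * (1/2 * Real.sqrt Real.pi) = Real.pi/2 by
    linear_combination (1/2) * sp]
  unfold L
  have : Real.sqrt 2 ≠ 0 := by positivity
  field_simp
  linear_combination (-1024) * s2

lemma c_lim0 : Tendsto (fun m : ℕ => c (m+1) * (m:ℝ)^4) atTop (𝓝 L) := by
  have t := ((Real.GammaSeq_tendsto_Gamma (13/4)).mul (Real.GammaSeq_tendsto_Gamma (11/4))).div
    ((Real.GammaSeq_tendsto_Gamma (1/2)).mul (Real.GammaSeq_tendsto_Gamma (3/2)))
    (mul_ne_zero (Real.Gamma_pos_of_pos (by norm_num)).ne' (Real.Gamma_pos_of_pos (by norm_num)).ne')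
  rw [gamma_val] at t
  refine t.congr' ?_
  filter_upwards [eventually_gt_atTop 0] with m hm
  have hm' : (0:ℝ) < m := by exact_mod_cast hm
  have ec : c (m+1) = (∏ j ∈ Finset.range (m+1), ((1/2:ℝ)+j)) * (∏ j ∈ Finset.range (m+1), ((3/2:ℝ)+j))
     / ((∏ j ∈ Finset.range (m+1), ((13/4:ℝ)+j)) * (∏ j ∈ Finset.range (m+1), ((11/4:ℝ)+j))) := by
    unfold c
    rw [← Finset.prod_mul_distrib, ← Finset.prod_mul_distrib, ← Finset.prod_div_distrib]
    refine Finset.prod_congr rfl (fun j _ => ?_)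
    unfold sig
    simp
  have pz (s : ℝ) (hs : 0 < s) : (∏ j ∈ Finset.range (m+1), (s+j)) ≠ 0 :=
    Finset.prod_ne_zero_iff.mpr (fun j _ => by positivity)
  have p1 := pz (1/2) (by norm_num)
  have p2 := pz (3/2) (by norm_num)
  have p3 := pz (13/4) (by norm_num)
  have p4 := pz (11/4) (by norm_num)
  have f : ((m.factorial : ℕ):ℝ) ≠ 0 := by positivity
  have e1 : (m:ℝ)^(13/4:ℝ) * (m:ℝ)^(11/4:ℝ) = (m:ℝ)^(6:ℕ) := by
    rw [← Real.rpow_add hm', ← Real.rpow_natCast]; norm_num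
  have e2 : (m:ℝ)^(1/2:ℝ) * (m:ℝ)^(3/2:ℝ) = (m:ℝ)^(2:ℕ) := by
    rw [← Real.rpow_add hm', ← Real.rpow_natCast]; norm_num
  have q1 : (m:ℝ)^(1/2:ℝ) ≠ 0 := by positivity
  have q2 : (m:ℝ)^(3/2:ℝ) ≠ 0 := by positivity
  simp only [Pi.div_apply, Real.GammaSeq]
  rw [ec]
  generalize (∏ j ∈ Finset.range (m+1), ((1/2:ℝ)+j)) = P1 at *
  generalize (∏ j ∈ Finset.range (m+1), ((3/2:ℝ)+j)) = P2 at *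
  generalize (∏ j ∈ Finset.range (m+1), ((13/4:ℝ)+j)) = P3 at *
  generalize (∏ j ∈ Finset.range (m+1), ((11/4:ℝ)+j)) = P4 at *
  generalize (m:ℝ)^(1/2:ℝ) = Q1 at *
  generalize (m:ℝ)^(3/2:ℝ) = Q2 at *
  generalize (m:ℝ)^(13/4:ℝ) = Q3 at *
  generalize (m:ℝ)^(11/4:ℝ) = Q4 at *
  generalize ((m.factorial : ℕ):ℝ) = F at *
  have e3 : Q3 * Q4 = Q1 * Q2 * (m:ℝ)^4 := by rw [e1, e2]; ring
  calc Q3 * F / P3 * (Q4 * F / P4) / (Q1 * F / P1 * (Q2 * F / P2))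
      = (Q3 * Q4) / (Q1 * Q2) * (P1 * P2 / (P3 * P4)) := by field_simp
    _ = _ := by rw [e3]; field_simp

noncomputable def A (m : ℕ) : ℝ := c m * ((m:ℝ)+1)^4

lemma inv_lim : Tendsto (fun m : ℕ => 1/((m:ℝ)+1)) atTop (𝓝 0) :=
  tendsto_one_div_add_atTop_nhds_zero_nat

lemma A_lim : Tendsto A atTop (𝓝 L) := by
  rw [← tendsto_add_atTop_iff_nat 1]
  have l : Tendsto (fun m : ℕ => (1 + 2 * (1/(m:ℝ)))^4) atTop (𝓝 ((1+2*0)^4)) :=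
    ((tendsto_one_div_atTop_nhds_zero_nat.const_mul 2).const_add 1).pow 4
  have t := c_lim0.mul l
  norm_num at t
  refine t.congr' ?_
  filter_upwards [eventually_gt_atTop 0] with m hm
  have hm' : (0:ℝ) < m := by exact_mod_cast hm
  unfold A
  push_cast
  rw [mul_assoc, ← mul_pow]
  congr 2
  field_simp
  ring

lemma A_bdd : ∃ K, ∀ m, |A m| ≤ K := by
  obtain ⟨K, hK⟩ := A_lim.abs.bddAbove_range
  exact ⟨K, fun m => hK ⟨m, rfl⟩⟩

lemma G_eq (n m : ℕ) : G n m = w n m * A m * (y n m / ((m:ℝ)+1)^4) := by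
  unfold G A
  field_simp

lemma G_le {K : ℝ} (hK : ∀ m, |A m| ≤ K) (n m : ℕ) :
    |G n m| ≤ 1000 * K * (((n:ℝ)+1)^5 * (1/9)^n) := by
  have K0 : 0 ≤ K := (abs_nonneg _).trans (hK 0)
  have hy : |y n m / ((m:ℝ)+1)^4| ≤ 1000 * ((n:ℝ)+1)^5 := by
    have := y_nonneg n m (by positivity) (by positivity)
    rw [abs_of_nonneg (by positivity), div_le_iff₀ (by positivity)]
    refine (y_le n m (by positivity) (by positivity)).trans (le_of_eq (by ring))
  rw [G_eq, abs_mul, abs_mul]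
  calc _ ≤ (1/9)^n * K * (1000 * ((n:ℝ)+1)^5) := by
        gcongr
        · exact w_le n m
        · exact hK m
    _ = _ := by ring

lemma bsum : Summable (fun n : ℕ => ((n:ℝ)+1)^5 * (1/9:ℝ)^n) := by
  have := summable_pow_mul_geometric_of_norm_lt_one 5 (r := (1/9:ℝ)) (by norm_num)
  have := ((summable_nat_add_iff 1).mpr this).mul_left 9
  refine this.congr (fun n => ?_)
  push_cast
  ring

lemma G_summable (m : ℕ) : Summable (fun n => G n m) := by
  obtain ⟨K, hK⟩ := A_bdd
  exact Summable.of_norm_bounded (bsum.mul_left (1000*K)) (fun n => G_le hK n m)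

lemma H_lim (m : ℕ) : Tendsto (fun n => H n m) atTop (𝓝 0) := by
  have t := (G_summable m).tendsto_atTop_zero.abs.const_mul 4
  simp only [abs_zero, mul_zero] at t
  refine squeeze_zero_norm (fun n => ?_) t
  unfold H G
  have h1 := h_le n m (by positivity) (by positivity)
  have h2 := h_nonneg n m (by positivity) (by positivity)
  have h3 := y_nonneg n m (by positivity) (by positivity)
  rw [Real.norm_eq_abs, abs_mul, abs_mul (w n m * c m) (y n m), abs_of_nonneg h2, abs_of_nonneg h3]
  have := abs_nonneg (w n m * c m)
  nlinarith

lemma tsum_succ (m : ℕ) : ∑' n, G n (m+1) = ∑' n, G n m := by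
  have s := ((G_summable (m+1)).sub (G_summable m))
  have t := s.hasSum.tendsto_sum_nat
  have e : ∀ N, ∑ n ∈ Finset.range N, (G n (m+1) - G n m) = H N m := by
    intro N
    rw [Finset.sum_congr rfl (fun n _ => G_H n m), Finset.sum_range_sub (fun n => H n m)]
    simp [H, h']
  simp only [e] at t
  have := tendsto_nhds_unique t (H_lim m)
  rw [(G_summable (m+1)).tsum_sub (G_summable m)] at this
  linarith

lemma tsum_const (m : ℕ) : ∑' n, G n m = ∑' n, G n 0 := by
  induction m with
  | zero => rfl
  | succ m ih => rw [tsum_succ, ih]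

lemma y_lim : Tendsto (fun m : ℕ => y (0:ℕ) m / ((m:ℝ)+1)^4) atTop (𝓝 1) := by
  have l := inv_lim
  have t : Tendsto (fun m : ℕ => 1 + 29/16 * (1/((m:ℝ)+1)) + 7/32 * (1/((m:ℝ)+1))^2
     + (-29/64) * (1/((m:ℝ)+1))^3 + (-15/128) * (1/((m:ℝ)+1))^4) atTop
     (𝓝 (1 + 29/16 * 0 + 7/32 * 0^2 + (-29/64) * 0^3 + (-15/128) * 0^4)) :=
    ((((l.const_mul _).const_add _).add ((l.pow 2).const_mul _)).add ((l.pow 3).const_mul _)).add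
      ((l.pow 4).const_mul _)
  norm_num at t
  refine t.congr (fun m => ?_)
  unfold y
  push_cast
  field_simp
  ring

lemma G_lim (n : ℕ) : Tendsto (fun m => G n m) atTop (𝓝 (if n = 0 then L else 0)) := by
  cases n with
  | zero =>
    simp only [if_true]
    have := A_lim.mul y_lim
    rw [mul_one] at this
    refine this.congr (fun m => ?_)
    rw [G_eq]; simp [w]
  | succ n =>
    obtain ⟨K, hK⟩ := A_bdd
    have t := (w_lim n).abs.mul_const (K * (1000 * (((n+1:ℕ):ℝ)+1)^5))
    simp only [abs_zero, zero_mul] at t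
    simp only [Nat.add_eq_zero_iff, one_ne_zero, and_false, if_false]
    refine squeeze_zero_norm (fun m => ?_) t
    have hy : |y (n+1:ℕ) m / ((m:ℝ)+1)^4| ≤ 1000 * (((n+1:ℕ):ℝ)+1)^5 := by
      have := y_nonneg (n+1:ℕ) m (by positivity) (by positivity)
      rw [abs_of_nonneg (by positivity), div_le_iff₀ (by positivity)]
      refine (y_le (n+1:ℕ) m (by positivity) (by positivity)).trans (le_of_eq (by ring))
    rw [G_eq, Real.norm_eq_abs, abs_mul, abs_mul, mul_assoc]
    have K0 : 0 ≤ K := (abs_nonneg _).trans (hK 0)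
    gcongr
    exact hK m

lemma G_tsum : ∑' n, G n 0 = L := by
  obtain ⟨K, hK⟩ := A_bdd
  have t := tendsto_tsum_of_dominated_convergence (𝓕 := atTop) (f := fun m n => G n m)
    (g := fun n => if n = 0 then L else 0) (bsum.mul_left (1000*K)) G_lim
    (Eventually.of_forall (fun m n => G_le hK n m))
  simp only [tsum_const, tsum_ite_eq] at t
  exact tendsto_nhds_unique tendsto_const_nhds t

lemma rf_succ (a : ℝ) (k : ℕ) : risingFactorial a (k+1) = risingFactorial a k * (a + k) := by
  simp [risingFactorial, Finset.prod_range_succ]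

lemma rf_pos (a : ℝ) (ha : 0 < a) (k : ℕ) : 0 < risingFactorial a k :=
  Finset.prod_pos (fun i _ => by positivity)

noncomputable def q (n : ℝ) : ℝ := 4*n^4 + 10*n^3 + 145/16*n^2 + 225/64*n + 63/128

lemma rho_q (n : ℝ) (hn : 0 ≤ n) : rho n 0 * q (n+1) =
   q n * ((-1/27) * ((-1/4+n)*(5/4+n)*(5/4+n)) / ((1+n)*(13/12+n)*(17/12+n))) := by
  unfold rho q
  field_simp
  ring

lemma w_q (k : ℕ) : w k 0 * q k = 63/128 * ((-1/27 : ℝ) ^ k *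
   (risingFactorial (-1/4) k * risingFactorial (5/4) k * risingFactorial (5/4) k) /
        (risingFactorial (1) k * risingFactorial (13/12) k * risingFactorial (17/12) k)) := by
  induction k with
  | zero => simp [w, q, risingFactorial]
  | succ k ih =>
    have e2 : w (k+1) 0 = w k 0 * rho k 0 := by simp [w, Finset.prod_range_succ]
    have h1 := rf_pos 1 (by norm_num) k
    have h2 := rf_pos (13/12) (by norm_num) k
    have h3 := rf_pos (17/12) (by norm_num) k
    rw [e2]
    push_cast
    rw [mul_assoc, rho_q k (by positivity), ← mul_assoc, ih]
    simp only [rf_succ, pow_succ]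
    field_simp

end S17

theorem stmt_17 :
    15 * Real.sqrt 2 / 4 =
      ∑' k : ℕ, (-1/27 : ℝ) ^ k * (risingFactorial (-1/4) k * risingFactorial (5/4) k * risingFactorial (5/4) k) /
        (risingFactorial (1) k * risingFactorial (13/12) k * risingFactorial (17/12) k) * (28 * (k:ℝ) + 5) := by
  have e : ∀ k : ℕ, (-1/27 : ℝ) ^ k * (risingFactorial (-1/4) k * risingFactorial (5/4) k * risingFactorial (5/4) k) /
        (risingFactorial (1) k * risingFactorial (13/12) k * risingFactorial (17/12) k) * (28 * (k:ℝ) + 5)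
        = 128/63 * S17.G k 0 := by
    intro k
    have h := S17.w_q k
    have hy : S17.y k (0:ℕ) = S17.q k * (28 * (k:ℝ) + 5) := by
      unfold S17.y S17.q; push_cast; ring
    have hc : S17.c 0 = 1 := by simp [S17.c]
    unfold S17.G
    rw [hc, hy]
    linear_combination (-(128/63) * (28 * (k:ℝ) + 5)) * h
  simp only [e]
  rw [tsum_mul_left, S17.G_tsum]
  unfold S17.L
  ring
end
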